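/- The series ∑_{n=1}^∞ ζ(2n)/(n(2n+1)(n+1)(n+2)·4^n) equals 2ζ(3)/π² + 31ζ(5)/(4π⁴) + (1/2)·log π - 7/8. -/

import Mathlib

open Real

noncomputable section

def dk (k : ℕ) (u : ℝ) : ℝ := ∑ j ∈ Finset.range k, 2 * cos ((2 * j + 1) * u)

lemma sin_mul_dk (k : ℕ) (u : ℝ) : sin u * dk k u = sin (2 * k * u) := by
  induction k with
  | zero => simp [dk]
  | succ k ih =>
    rw [dk, Finset.sum_range_succ, mul_add, ← dk, ih]
    have e1 : 2 * (k : ℝ) * u = (2 * k + 1) * u - u := by ring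
    have e2 : 2 * ((k + 1 : ℕ) : ℝ) * u = (2 * k + 1) * u + u := by push_cast; ring
    rw [e1, e2, sin_add, sin_sub]; ring

lemma cont_dk (k : ℕ) : Continuous (dk k) := by
  unfold dk; fun_prop

lemma int_cos_even (j : ℕ) (hj : j ≠ 0) : ∫ u in (0:ℝ)..π / 2, cos (2 * j * u) = 0 := by
  have h : (2 * (j:ℝ)) ≠ 0 := by positivity
  rw [intervalIntegral.integral_comp_mul_left (fun x => cos x) h, integral_cos]
  have : 2 * (j:ℝ) * (π / 2) = j * π := by ring
  rw [this, sin_nat_mul_pi]; simp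

lemma int_cos_dk (k : ℕ) : ∫ u in (0:ℝ)..π / 2, cos u * dk (k + 1) u = π / 2 := by
  induction k with
  | zero =>
    have : ∀ u, cos u * dk (0 + 1) u = 2 * cos u ^ 2 := by
      intro u; simp [dk]; ring
    simp_rw [this]
    rw [intervalIntegral.integral_const_mul, integral_cos_sq]
    simp
    ring
  | succ k ih =>
    have : ∀ u, cos u * dk (k + 1 + 1) u
        = cos u * dk (k + 1) u + (cos (2 * (k + 2 : ℕ) * u) + cos (2 * (k + 1 : ℕ) * u)) := by
      intro u
      rw [dk, Finset.sum_range_succ, mul_add, ← dk]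
      have e1 : 2 * ((k + 1 : ℕ) : ℝ) * u = (2 * (k + 1 : ℕ) + 1) * u - u := by ring
      have e2 : 2 * ((k + 2 : ℕ) : ℝ) * u = (2 * (k + 1 : ℕ) + 1) * u + u := by push_cast; ring
      rw [e1, e2, cos_add, cos_sub]; ring
    simp_rw [this]
    have hc := cont_dk (k + 1)
    rw [intervalIntegral.integral_add, intervalIntegral.integral_add, ih,
      int_cos_even _ (by omega), int_cos_even _ (by omega)]
    · simp
    all_goals apply Continuous.intervalIntegrable; fun_prop

lemma int_logsin_cos_u (k : ℕ) (hk : k ≠ 0) :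
    ∫ u in (0:ℝ)..π / 2, log (sin u) * cos (2 * k * u) = - π / (4 * k) := by
  have hk' : (k : ℝ) ≠ 0 := by exact_mod_cast hk
  have hc := cont_dk k
  have hint : IntervalIntegrable (fun u => log (sin u) * cos (2 * k * u)) MeasureTheory.volume 0 (π/2) := by
    apply IntervalIntegrable.mul_continuousOn intervalIntegrable_log_sin
    fun_prop
  have hint2 : IntervalIntegrable (fun u => cos u * dk k u / (2 * k)) MeasureTheory.volume 0 (π/2) := by
    apply Continuous.intervalIntegrable; fun_prop
  have h := intervalIntegral.integral_eq_sub_of_hasDerivAt_of_le (a := 0) (b := π / 2)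
    (f := fun u => (sin u * log (sin u)) * dk k u / (2 * k))
    (f' := fun u => log (sin u) * cos (2 * k * u) + cos u * dk k u / (2 * k)) (by positivity)
    (by
      have := Real.continuous_mul_log.comp continuous_sin
      simp only [Function.comp_def] at this
      apply Continuous.continuousOn
      fun_prop)
    (by
      intro u hu
      have hs : 0 < sin u := sin_pos_of_pos_of_lt_pi hu.1 (by linarith [hu.2, pi_pos])
      have e : (fun u => (sin u * log (sin u)) * dk k u / (2 * k))
          = fun u => log (sin u) * sin (2 * k * u) / (2 * k) := by
        funext u; rw [← sin_mul_dk]; ring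
      rw [e]
      have h1 := (hasDerivAt_sin u).log hs.ne'
      have h2 : HasDerivAt (fun u => sin (2 * k * u)) (cos (2 * k * u) * (2 * k)) u := by
        simpa using ((hasDerivAt_id u).const_mul (2 * (k:ℝ))).sin
      refine ((h1.mul h2).div_const (2 * (k:ℝ))).congr_deriv ?_
      rw [← sin_mul_dk]
      field_simp
      ring)
    (hint.add hint2)
  rw [intervalIntegral.integral_add hint hint2, intervalIntegral.integral_div] at h
  obtain ⟨m, rfl⟩ := Nat.exists_eq_succ_of_ne_zero hk
  rw [Nat.succ_eq_add_one, int_cos_dk] at h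
  simp at h
  push_cast at hk' ⊢
  have : -π / (4 * ((m:ℝ) + 1)) = - (π / 2 / (2 * ((m:ℝ) + 1))) := by field_simp; ring
  rw [this]; linarith

lemma int_logsin_cos (k : ℕ) (hk : k ≠ 0) :
    ∫ x in (0:ℝ)..1 / 2, log (sin (π * x)) * cos (2 * π * k * x) = - 1 / (4 * k) := by
  have h := intervalIntegral.integral_comp_mul_left (a := 0) (b := 1/2)
    (fun u => log (sin u) * cos (2 * k * u)) pi_ne_zero
  have e : π * (1 / 2) = π / 2 := by ring
  rw [mul_zero, e, int_logsin_cos_u k hk] at h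
  have e2 : ∀ x, 2 * π * k * x = 2 * k * (π * x) := by intro x; ring
  simp_rw [e2, h]
  have hk' : (k : ℝ) ≠ 0 := by exact_mod_cast hk
  simp; field_simp

lemma int_logsin : ∫ x in (0:ℝ)..1 / 2, log (sin (π * x)) = - log 2 / 2 := by
  have h := intervalIntegral.integral_comp_mul_left (a := 0) (b := 1/2)
    (fun u => log (sin u)) pi_ne_zero
  have e : π * (1 / 2) = π / 2 := by ring
  rw [mul_zero, e, integral_log_sin_zero_pi_div_two] at h
  rw [h]
  simp; field_simp

lemma intble_logsin :
    IntervalIntegrable (fun x => log (sin (π * x))) MeasureTheory.volume 0 (1/2) := by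
  have h := (intervalIntegrable_log_sin (a := 0) (b := π / 2)).comp_mul_left (c := π)
  have e : π / 2 / π = 1 / 2 := by field_simp
  rw [e, zero_div] at h
  exact h

def ww (x : ℝ) : ℝ := 4 / 3 - 4 * x + 16 / 3 * x ^ 3

def aa (n : ℕ) : ℝ := 4 / π ^ 2 * (1 / (n:ℝ) ^ 2) + 8 / π ^ 4 * (1 - (-1) ^ n) * (1 / (n:ℝ) ^ 4)

lemma cont_ww : Continuous ww := by unfold ww; fun_prop

lemma bern2 (x : ℝ) : (Polynomial.map (algebraMap ℚ ℝ) (Polynomial.bernoulli 2)).eval x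
    = x ^ 2 - x + 1 / 6 := by
  have := bernoulliFun_two x
  rw [bernoulliFun] at this
  rw [this]; ring

lemma bern4 (x : ℝ) : (Polynomial.map (algebraMap ℚ ℝ) (Polynomial.bernoulli 4)).eval x
    = x ^ 4 - 2 * x ^ 3 + x ^ 2 - 1 / 30 := by
  simp only [Polynomial.bernoulli, Finset.sum_range_succ, Finset.sum_range_zero, bernoulli,
    bernoulli'_zero, bernoulli'_one, bernoulli'_two, bernoulli'_three, bernoulli'_four]
  simp [Nat.choose]
  ring

lemma fourier_ww {x : ℝ} (hx : x ∈ Set.Icc (0:ℝ) (1/2)) :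
    HasSum (fun n : ℕ => aa n * cos (2 * π * n * x)) (ww x - 1 / 2) := by
  obtain ⟨h0, h1⟩ := hx
  have A := hasSum_one_div_nat_pow_mul_cos (k := 1) one_ne_zero (x := x) ⟨h0, by linarith⟩
  have B := hasSum_one_div_nat_pow_mul_cos (k := 2) two_ne_zero (x := x) ⟨h0, by linarith⟩
  have C := hasSum_one_div_nat_pow_mul_cos (k := 2) two_ne_zero (x := x + 1 / 2)
    ⟨by linarith, by linarith⟩
  have hc : ∀ n : ℕ, cos (2 * π * n * (x + 1 / 2)) = (-1) ^ n * cos (2 * π * n * x) := by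
    intro n
    have : 2 * π * n * (x + 1 / 2) = 2 * π * n * x + n * π := by ring
    rw [this, cos_add_nat_mul_pi]
  simp_rw [hc] at C
  simp only [show 2 * 1 = 2 from rfl, show 2 * 2 = 4 from rfl, bern2, bern4] at A B C
  have D := ((A.mul_left (4 / π ^ 2)).add (B.mul_left (8 / π ^ 4))).sub (C.mul_left (8 / π ^ 4))
  have hp := pi_ne_zero
  convert! D using 1
  · funext n; unfold aa; ring
  · simp [ww, Nat.factorial]; field_simp; ring

lemma abs_aa_le (n : ℕ) : |aa n| ≤ 4 / π ^ 2 * (1 / (n:ℝ) ^ 2) + 16 / π ^ 4 * (1 / (n:ℝ) ^ 4) := by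
  have h : |1 - (-1 : ℝ) ^ n| ≤ 2 := by
    rcases neg_one_pow_eq_or ℝ n with h | h <;> rw [h] <;> norm_num
  unfold aa
  refine (abs_add_le _ _).trans ?_
  rw [abs_mul (8 / π ^ 4 * _), abs_mul (8 / π ^ 4), abs_of_nonneg (by positivity : 0 ≤ 8 / π ^ 4),
    abs_of_nonneg (by positivity : 0 ≤ 4 / π ^ 2 * (1 / (n:ℝ) ^ 2)),
    abs_of_nonneg (by positivity : 0 ≤ (1 / (n:ℝ) ^ 4))]
  have : 8 / π ^ 4 * |1 - (-1 : ℝ) ^ n| ≤ 16 / π ^ 4 := by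
    calc _ ≤ 8 / π ^ 4 * 2 := by gcongr
      _ = _ := by ring
  gcongr

lemma summable_aa : Summable fun n => |aa n| := by
  refine Summable.of_nonneg_of_le (fun _ => abs_nonneg _) abs_aa_le ?_
  apply Summable.add <;> apply Summable.mul_left <;> apply Real.summable_one_div_nat_pow.2 <;> norm_num

lemma sum_part : HasSum (fun n : ℕ => aa n * (- 1 / (4 * n)))
    (∫ x in (0:ℝ)..1 / 2, log (sin (π * x)) * (ww x - 1 / 2)) := by
  have h := intervalIntegral.hasSum_integral_of_dominated_convergence
    (a := 0) (b := 1 / 2) (μ := MeasureTheory.volume)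
    (F := fun (n : ℕ) x => log (sin (π * x)) * (aa n * cos (2 * π * n * x)))
    (f := fun x => log (sin (π * x)) * (ww x - 1 / 2))
    (fun n x => |log (sin (π * x))| * |aa n|)
    (by
      intro n
      apply Measurable.aestronglyMeasurable
      fun_prop)
    (by
      intro n
      refine Filter.Eventually.of_forall fun x _ => ?_
      rw [Real.norm_eq_abs, abs_mul, abs_mul]
      gcongr
      exact mul_le_of_le_one_right (abs_nonneg _) (abs_cos_le_one _))
    (Filter.Eventually.of_forall fun x _ => summable_aa.mul_left _)
    (by
      simp_rw [tsum_mul_left]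
      exact intble_logsin.abs.mul_const _)
    (by
      refine Filter.Eventually.of_forall fun x hx => ?_
      rw [Set.uIoc_of_le (by norm_num)] at hx
      exact (fourier_ww ⟨hx.1.le, hx.2⟩).mul_left _)
  convert! h using 1
  funext n
  have : ∀ x, log (sin (π * x)) * (aa n * cos (2 * π * n * x))
      = aa n * (log (sin (π * x)) * cos (2 * π * n * x)) := by intro x; ring
  simp_rw [this]
  rw [intervalIntegral.integral_const_mul]
  rcases eq_or_ne n 0 with rfl | hn
  · simp [aa]
  · rw [int_logsin_cos n hn]

def zz (k : ℕ) : ℝ := ∑' n : ℕ, 1 / (n:ℝ) ^ k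

lemma hasSum_zz {k : ℕ} (hk : 1 < k) : HasSum (fun n : ℕ => 1 / (n:ℝ) ^ k) (zz k) :=
  (Real.summable_one_div_nat_pow.2 hk).hasSum

lemma zeta_zz {k : ℕ} (hk : 1 < k) : riemannZeta k = (zz k : ℂ) := by
  rw [zeta_nat_eq_tsum_of_gt_one hk, zz]; push_cast; rfl

lemma alt5 : HasSum (fun n : ℕ => (1 - (-1:ℝ) ^ n) * (1 / (n:ℝ) ^ 5)) (31 / 16 * zz 5) := by
  have h := hasSum_zz (k := 5) (by norm_num)
  have he : HasSum (fun n : ℕ => 1 / ((2 * n : ℕ):ℝ) ^ 5) (1 / 32 * zz 5) := by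
    convert! h.mul_left (1/32) using 1
    funext n; push_cast; rw [mul_pow]; ring
  have ho : Summable (fun n : ℕ => 1 / ((2 * n + 1 : ℕ):ℝ) ^ 5) :=
    h.summable.comp_injective (i := fun n => 2 * n + 1) (fun a b hab => by simpa using hab)
  have h2 := h.unique
    (HasSum.even_add_odd (f := fun n : ℕ => 1 / (n:ℝ) ^ 5) he ho.hasSum)
  have hz : HasSum (fun n : ℕ => (1 - (-1:ℝ) ^ (2 * n)) * (1 / ((2 * n : ℕ):ℝ) ^ 5)) 0 := by
    simpa using (hasSum_zero : HasSum (fun _ : ℕ => (0:ℝ)) 0)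
  have ho2 : HasSum (fun n : ℕ => (1 - (-1:ℝ) ^ (2 * n + 1)) * (1 / ((2 * n + 1 : ℕ):ℝ) ^ 5))
      (2 * (∑' n : ℕ, 1 / ((2 * n + 1 : ℕ):ℝ) ^ 5)) := by
    convert! ho.hasSum.mul_left 2 using 1
    funext n; rw [pow_succ, pow_mul]; norm_num
  have h4 := HasSum.even_add_odd (f := fun n : ℕ => (1 - (-1:ℝ) ^ n) * (1 / (n:ℝ) ^ 5)) hz ho2
  have e : 31 / 16 * zz 5 = 0 + 2 * (∑' n : ℕ, 1 / ((2 * n + 1 : ℕ):ℝ) ^ 5) := by linarith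
  rw [e]
  exact h4

lemma value_part : ∫ x in (0:ℝ)..1 / 2, log (sin (π * x)) * (ww x - 1 / 2)
    = - (zz 3 / π ^ 2 + 31 / (8 * π ^ 4) * zz 5) := by
  apply sum_part.unique
  have h3 := (hasSum_zz (k := 3) (by norm_num)).mul_left (-1 / π ^ 2)
  have h5 := alt5.mul_left (-2 / π ^ 4)
  have hp := pi_ne_zero
  convert! h3.add h5 using 1
  · funext n
    rcases eq_or_ne n 0 with rfl | hn
    · simp
    · have : (n:ℝ) ≠ 0 := by exact_mod_cast hn
      unfold aa
      generalize (1 - (-1:ℝ) ^ n) = c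
      field_simp
      ring
  · field_simp; ring

lemma value_logsin : ∫ x in (0:ℝ)..1 / 2, log (sin (π * x)) * ww x
    = - (zz 3 / π ^ 2 + 31 / (8 * π ^ 4) * zz 5) - log 2 / 4 := by
  have h1 : IntervalIntegrable (fun x => log (sin (π * x)) * (ww x - 1 / 2))
      MeasureTheory.volume 0 (1/2) :=
    intble_logsin.mul_continuousOn (by have := cont_ww; fun_prop)
  have h2 := intble_logsin.mul_const (1/2)
  have : ∀ x, log (sin (π * x)) * ww x
    = log (sin (π * x)) * (ww x - 1 / 2) + log (sin (π * x)) * (1 / 2) := by intro x; ring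
  simp_rw [this]
  rw [intervalIntegral.integral_add h1 h2, value_part, intervalIntegral.integral_mul_const, int_logsin]
  ring

lemma intble_log : IntervalIntegrable (fun x => log (π * x)) MeasureTheory.volume 0 (1/2) := by
  have h := (intervalIntegral.intervalIntegrable_log' (a := 0) (b := π / 2)).comp_mul_left (c := π)
  have e : π / 2 / π = 1 / 2 := by field_simp
  rw [e, zero_div] at h
  exact h

lemma value_log : ∫ x in (0:ℝ)..1 / 2, log (π * x) * ww x = 1 / 4 * log (π / 2) - 7 / 16 := by
  have hp := pi_ne_zero
  have h := intervalIntegral.integral_eq_sub_of_hasDerivAt_of_le (a := 0) (b := 1 / 2)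
    (f := fun x => (π * x * log (π * x)) * ((4 / 3 - 2 * x + 4 / 3 * x ^ 3) / π)
      - (4 / 3 * x - x ^ 2 + x ^ 4 / 3))
    (f' := fun x => log (π * x) * ww x) (by norm_num)
    (by
      have := Real.continuous_mul_log.comp (continuous_const_mul π)
      simp only [Function.comp_def] at this
      apply Continuous.continuousOn
      fun_prop)
    (by
      intro x hx
      have hx0 : x ≠ 0 := hx.1.ne'
      have e : (fun x => (π * x * log (π * x)) * ((4 / 3 - 2 * x + 4 / 3 * x ^ 3) / π)
          - (4 / 3 * x - x ^ 2 + x ^ 4 / 3)) = fun x => log (π * x) *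
          (4 / 3 * x - 2 * x ^ 2 + 4 / 3 * x ^ 4) - (4 / 3 * x - x ^ 2 + x ^ 4 / 3) := by
        funext x; field_simp
      rw [e]
      have h1 : HasDerivAt (fun x => log (π * x)) (π * 1 / (π * x)) x :=
        ((hasDerivAt_id x).const_mul π).log (mul_ne_zero hp hx0)
      have h2 : HasDerivAt (fun x : ℝ => 4 / 3 * x - 2 * x ^ 2 + 4 / 3 * x ^ 4)
          (4 / 3 * 1 - 2 * ((2:ℕ) * x ^ 1) + 4 / 3 * ((4:ℕ) * x ^ 3)) x :=
        (((hasDerivAt_id x).const_mul _).sub ((hasDerivAt_pow 2 x).const_mul _)).add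
          ((hasDerivAt_pow 4 x).const_mul _)
      have h3 : HasDerivAt (fun x : ℝ => 4 / 3 * x - x ^ 2 + x ^ 4 / 3)
          (4 / 3 * 1 - ((2:ℕ) * x ^ 1) + ((4:ℕ) * x ^ 3) / 3) x :=
        (((hasDerivAt_id x).const_mul _).sub ((hasDerivAt_pow 2 x))).add
          ((hasDerivAt_pow 4 x).div_const _)
      refine ((h1.mul h2).sub h3).congr_deriv ?_
      unfold ww
      field_simp
      push_cast
      ring)
    (intble_log.mul_continuousOn (by have := cont_ww; fun_prop))
  rw [h]
  have : π * (1 / 2) = π / 2 := by ring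
  rw [this]
  simp
  field_simp
  ring

def gg (x : ℝ) : ℝ := log (π * x) - log (sin (π * x))

lemma value_gg : ∫ x in (0:ℝ)..1 / 2, gg x * ww x
    = zz 3 / π ^ 2 + 31 / (8 * π ^ 4) * zz 5 + 1 / 4 * log π - 7 / 16 := by
  have h1 : IntervalIntegrable (fun x => log (sin (π * x)) * ww x)
      MeasureTheory.volume 0 (1/2) :=
    intble_logsin.mul_continuousOn (by have := cont_ww; fun_prop)
  have h2 : IntervalIntegrable (fun x => log (π * x) * ww x)
      MeasureTheory.volume 0 (1/2) :=
    intble_log.mul_continuousOn (by have := cont_ww; fun_prop)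
  simp_rw [gg, sub_mul]
  rw [intervalIntegral.integral_sub h2 h1, value_log, value_logsin,
    log_div pi_ne_zero two_ne_zero]
  ring

lemma gg_sum1 {x : ℝ} (h0 : 0 < x) (h1 : x ≤ 1 / 2) :
    HasSum (fun j : ℕ => - log (1 - x ^ 2 / ((j:ℝ) + 1) ^ 2)) (gg x) := by
  have hlt : ∀ j : ℕ, x ^ 2 / ((j:ℝ) + 1) ^ 2 < 1 := by
    intro j
    rw [div_lt_one (by positivity)]
    have : (0:ℝ) ≤ j := by positivity
    nlinarith
  have hpos : ∀ j : ℕ, 0 < 1 - x ^ 2 / ((j:ℝ) + 1) ^ 2 := fun j => by linarith [hlt j]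
  rw [hasSum_iff_tendsto_nat_of_nonneg]
  · have hs : 0 < sin (π * x) := sin_pos_of_pos_of_lt_pi (by positivity) (by nlinarith [pi_pos])
    have h := (Real.tendsto_euler_sin_prod x).log hs.ne'
    have h2 := h.const_sub (log (π * x))
    refine h2.congr fun n => ?_
    rw [log_mul (by positivity) (Finset.prod_ne_zero_iff.2 fun j _ => (hpos j).ne'),
      log_prod (fun j _ => (hpos j).ne'), Finset.sum_neg_distrib]
    ring
  · intro j
    rw [neg_nonneg]
    exact log_nonpos (hpos j).le (by linarith [show 0 ≤ x ^ 2 / ((j:ℝ) + 1) ^ 2 by positivity])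

lemma gg_sum {x : ℝ} (h0 : 0 < x) (h1 : x ≤ 1 / 2) :
    HasSum (fun n : ℕ => zz (2 * (n + 1)) / (n + 1) * x ^ (2 * (n + 1))) (gg x) := by
  have hlt : ∀ j : ℕ, x ^ 2 / ((j:ℝ) + 1) ^ 2 < 1 := by
    intro j
    rw [div_lt_one (by positivity)]
    have : (0:ℝ) ≤ j := by positivity
    nlinarith
  have hin : ∀ j : ℕ, HasSum (fun n : ℕ => (x ^ 2 / ((j:ℝ) + 1) ^ 2) ^ (n + 1) / ((n:ℝ) + 1))
      (- log (1 - x ^ 2 / ((j:ℝ) + 1) ^ 2)) := fun j =>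
    Real.hasSum_pow_div_log_of_abs_lt_one
      (by rw [abs_of_nonneg (by positivity)]; exact hlt j)
  set F : ℕ × ℕ → ℝ := fun p => (x ^ 2 / ((p.1:ℝ) + 1) ^ 2) ^ (p.2 + 1) / ((p.2:ℝ) + 1) with hF
  have hsum : Summable F := by
    rw [summable_prod_of_nonneg (fun p => by simp only [hF, Pi.zero_apply]; positivity)]
    refine ⟨fun j => (hin j).summable, ?_⟩
    have : (fun j => ∑' n, F (j, n)) = fun j : ℕ => - log (1 - x ^ 2 / ((j:ℝ) + 1) ^ 2) := by
      funext j; exact (hin j).tsum_eq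
    rw [this]; exact (gg_sum1 h0 h1).summable
  have htot : HasSum F (gg x) := by
    have := hsum.hasSum.prod_fiberwise hin
    rw [← this.unique (gg_sum1 h0 h1)]; exact hsum.hasSum
  have hsw := (Equiv.prodComm ℕ ℕ).hasSum_iff.2 htot
  refine hsw.prod_fiberwise fun n => ?_
  have hz := hasSum_zz (k := 2 * (n + 1)) (by omega)
  rw [← hasSum_nat_add_iff' 1] at hz
  simp only [Finset.sum_range_one, Nat.cast_zero] at hz
  rw [zero_pow (by omega), div_zero, sub_zero] at hz
  convert! hz.mul_left (x ^ (2 * (n + 1)) / (n + 1)) using 1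
  · funext j
    simp only [hF, Function.comp_apply, Equiv.prodComm_apply, Prod.swap_prod_mk]
    push_cast
    rw [div_pow, ← pow_mul, ← pow_mul]
    field_simp
  · ring

lemma int_pow_ww (m : ℕ) : ∫ x in (0:ℝ)..1 / 2, x ^ m * ww x
    = 4 / 3 * ((1/2) ^ (m + 1) / (m + 1)) - 4 * ((1/2) ^ (m + 2) / (m + 2))
      + 16 / 3 * ((1/2) ^ (m + 4) / (m + 4)) := by
  have : ∀ x, x ^ m * ww x = 4 / 3 * x ^ m - 4 * x ^ (m + 1) + 16 / 3 * x ^ (m + 3) := by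
    intro x; unfold ww; ring
  simp_rw [this]
  rw [intervalIntegral.integral_add, intervalIntegral.integral_sub]
  · simp only [intervalIntegral.integral_const_mul, integral_pow]
    push_cast
    simp only [add_assoc]
    norm_num
  all_goals apply Continuous.intervalIntegrable; fun_prop

lemma zz_nonneg (k : ℕ) : 0 ≤ zz k := tsum_nonneg fun n => by positivity

lemma main_sum : HasSum (fun n : ℕ => zz (2 * (n + 1)) / (n + 1) *
    (∫ x in (0:ℝ)..1 / 2, x ^ (2 * (n + 1)) * ww x)) (∫ x in (0:ℝ)..1 / 2, gg x * ww x) := by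
  have hs := (gg_sum (x := 1 / 2) (by norm_num) le_rfl).summable
  have hc := cont_ww
  have h := intervalIntegral.hasSum_integral_of_dominated_convergence
    (a := 0) (b := 1 / 2) (μ := MeasureTheory.volume)
    (F := fun (n : ℕ) x => zz (2 * (n + 1)) / (n + 1) * x ^ (2 * (n + 1)) * ww x)
    (f := fun x => gg x * ww x)
    (fun n x => zz (2 * (n + 1)) / (n + 1) * (1 / 2) ^ (2 * (n + 1)) * |ww x|)
    (by
      intro n
      apply Continuous.aestronglyMeasurable
      fun_prop)
    (by
      intro n
      refine Filter.Eventually.of_forall fun x hx => ?_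
      rw [Set.uIoc_of_le (by norm_num)] at hx
      have hx0 := hx.1.le
      have := zz_nonneg (2 * (n + 1))
      rw [Real.norm_eq_abs, abs_mul, abs_of_nonneg (a := _ * x ^ _) (by positivity)]
      gcongr
      exact hx.2)
    (Filter.Eventually.of_forall fun x _ => hs.mul_right _)
    (by
      simp_rw [tsum_mul_right]
      apply Continuous.intervalIntegrable
      fun_prop)
    (by
      refine Filter.Eventually.of_forall fun x hx => ?_
      rw [Set.uIoc_of_le (by norm_num)] at hx
      exact (gg_sum hx.1 hx.2).mul_right _)
  convert! h using 1
  funext n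
  rw [← intervalIntegral.integral_const_mul]
  simp_rw [mul_assoc]

lemma real_sum : HasSum (fun n : ℕ => zz (2 * (n + 1)) /
    (((n:ℝ) + 1) * (2 * n + 3) * (n + 2) * (n + 3) * 4 ^ (n + 1)))
    (2 * zz 3 / π ^ 2 + 31 * zz 5 / (4 * π ^ 4) + (1 / 2) * log π - 7 / 8) := by
  have hp := pi_ne_zero
  have h := main_sum.mul_left 2
  rw [value_gg] at h
  convert! h using 1
  · funext n
    rw [int_pow_ww]
    have e : (4:ℝ) ^ (n + 1) = 2 ^ (2 * (n + 1)) := by rw [pow_mul]; norm_num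
    rw [e, pow_add _ _ 1, pow_add _ _ 2, pow_add _ _ 4, div_pow 1 2 (2 * (n + 1)), one_pow]
    generalize zz (2 * (n + 1)) = z
    have h2 : (2:ℝ) ^ (2 * (n + 1)) ≠ 0 := by positivity
    generalize (2:ℝ) ^ (2 * (n + 1)) = t at h2
    push_cast
    have e1 : 2 * ((n:ℝ) + 1) + 1 = 2 * n + 3 := by ring
    have e2 : 2 * ((n:ℝ) + 1) + 2 = 2 * (n + 2) := by ring
    have e3 : 2 * ((n:ℝ) + 1) + 4 = 2 * (n + 3) := by ring
    rw [e1, e2, e3]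
    have k1 : 2 * (n:ℝ) + 3 ≠ 0 := by positivity
    have k2 : (n:ℝ) + 2 ≠ 0 := by positivity
    have k3 : (n:ℝ) + 3 ≠ 0 := by positivity
    have k4 : (n:ℝ) + 1 ≠ 0 := by positivity
    field_simp
    ring
  · field_simp; ring

end

theorem stmt11 :
    ∑' n : ℕ, riemannZeta (2 * (n + 1)) /
        ((n + 1) * (2 * n + 3) * (n + 2) * (n + 3) * 4 ^ (n + 1)) =
      2 * riemannZeta 3 / (π : ℂ) ^ 2 + 31 * riemannZeta 5 / (4 * (π : ℂ) ^ 4) +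
        (1 / 2) * (Real.log π : ℂ) - 7 / 8 := by
  have h3 : riemannZeta 3 = (zz 3 : ℂ) := by
    have := zeta_zz (k := 3) (by norm_num); exact_mod_cast this
  have h5 : riemannZeta 5 = (zz 5 : ℂ) := by
    have := zeta_zz (k := 5) (by norm_num); exact_mod_cast this
  have hz : ∀ n : ℕ, riemannZeta (2 * (n + 1)) = (zz (2 * (n + 1)) : ℂ) := by
    intro n
    have := zeta_zz (k := 2 * (n + 1)) (by omega)
    push_cast at this
    exact this
  have h := Complex.hasSum_ofReal.2 real_sum
  rw [h3, h5]
  simp_rw [hz]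
  refine Eq.trans ?_ (h.tsum_eq.trans ?_)
  · congr 1; funext n; push_cast; rfl
  · push_cast; rfl
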